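/- Let Γ = ⟨a₀,…,a_g⟩ be a free numerical semigroup with structure constants n_i and let n_i a_i = ℓ₀^{(i)} a₀ + ⋯ + ℓ_{i−1}^{(i)} a_{i−1} be the standard representations with 0 ≤ ℓ_j^{(i)} < n_j for j ≥ 1. Then the binomials f_i = u_i^{n_i} − u₀^{ℓ₀^{(i)}} u₁^{ℓ₁^{(i)}} ⋯ u_{i−1}^{ℓ_{i−1}^{(i)}}, i = 1,…,g, generate the kernel of the ℂ-algebra map ℂ[u₀,…,u_g] → ℂ[t] sending u_i ↦ t^{a_i}, and f₁,…,f_g form a regular sequence. -/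

import Mathlib

open MvPolynomial

/-!
Let `J_k` be the ideal generated by the first `k` binomials. It is the kernel of the monomial map
`φ_k` which sends `u_j` to `t ^ a_j` for `j ≤ k` and fixes the variables `u_j` with `j > k`. Indeed,
suppose that two monomials have the same image under `φ_{k+1}`. Their exponents of `u_{k+1}` are
congruent modulo `n_{k+1}`, so in one of them some power of `u_{k+1} ^ n_{k+1}` can be replaced by
the same power of the other term of `f_{k+1}` so as to make these exponents equal; the two monomials
then have the same image under `φ_k`. By induction, monomials with the same image under `φ_k` are
congruent modulo `J_k`.

The map `φ_k` sends `f_{k+1}` to a difference of two distinct monomials in the algebra of a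
cancellative torsion-free monoid, and such a difference is never a zero divisor. Hence `f_{k+1}` is
regular modulo `J_k = ker φ_k`.
-/

section LinearAlgebra

variable {R V W W' κ ι : Type*} [Semiring R] [AddCommMonoid V] [AddCommMonoid W]
  [AddCommMonoid W'] [Module R V] [Module R W] [Module R W']

theorem ker_le_ker_of_factorsThrough {v : κ → V} (hv : Submodule.span R (Set.range v) = ⊤)
    {b : ι → W} (hb : LinearIndependent R b) {w : κ → ι} {φ : V →ₗ[R] W}
    (hφ : ∀ m, φ (v m) = b (w m)) {ψ : V →ₗ[R] W'} (hψ : Function.FactorsThrough (ψ ∘ v) w) :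
    LinearMap.ker φ ≤ LinearMap.ker ψ := by
  intro x hx
  obtain ⟨c, rfl⟩ : x ∈ LinearMap.range (Finsupp.linearCombination R v) := by
    rw [Finsupp.range_linearCombination, hv]
    exact Submodule.mem_top
  have hc : Finsupp.mapDomain w c = 0 := by
    have hcomp : φ ∘ v = b ∘ w := funext hφ
    refine hb ?_
    rw [Finsupp.linearCombination_mapDomain, map_zero, ← hcomp]
    rwa [LinearMap.mem_ker, Finsupp.apply_linearCombination] at hx
  have hextend : Function.extend w (ψ ∘ v) 0 ∘ w = ψ ∘ v := funext (hψ.extend_apply 0)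
  rw [LinearMap.mem_ker, Finsupp.apply_linearCombination, ← hextend,
    ← Finsupp.linearCombination_mapDomain, hc, map_zero]

end LinearAlgebra

section MonoidAlgebra

theorem linearIndependent_single_one (R A : Type*) [Semiring R] :
    LinearIndependent R fun u : A => (AddMonoidAlgebra.single u 1 : AddMonoidAlgebra R A) :=
  (Module.Basis.ofRepr (AddMonoidAlgebra.coeffLinearEquiv R)).linearIndependent

-- If `p * x ^ u = p * x ^ v`, then translating the support of `p` by `u` and by `v` gives the same
-- finite set; comparing the sums of its elements gives `s • u = s • v`, where `s` is the size of
-- the support.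
theorem single_sub_single_mem_nonZeroDivisorsRight {R A : Type*} [Ring R] [AddCommMonoid A]
    [IsCancelAdd A] [IsAddTorsionFree A] {u v : A} (huv : u ≠ v) :
    (AddMonoidAlgebra.single u 1 - AddMonoidAlgebra.single v 1 : AddMonoidAlgebra R A) ∈
      nonZeroDivisorsRight (AddMonoidAlgebra R A) := by
  intro p hp
  have hsupp : p.coeff.support.map (addRightEmbedding u) =
      p.coeff.support.map (addRightEmbedding v) := by
    rw [mul_sub, sub_eq_zero] at hp
    simpa only [AddMonoidAlgebra.support_coeff_mul_single _ (1 : R) (by simp)] using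
      congrArg (·.coeff.support) hp
  have hsum := congrArg (fun s => ∑ x ∈ s, x) hsupp
  simp only [Finset.sum_map, addRightEmbedding_apply, Finset.sum_add_distrib, Finset.sum_const,
    add_right_inj] at hsum
  by_contra hp0
  have hcard : p.coeff.support.card ≠ 0 := by simpa using hp0
  exact huv (nsmul_right_injective hcard hsum)

theorem map_monomial_nsmul_add_congr {σ R S : Type*} [CommSemiring R] [CommSemiring S]
    (ψ : MvPolynomial σ R →+* S) {u v : σ →₀ ℕ} (h : ψ (monomial u 1) = ψ (monomial v 1)) (q : ℕ)
    (c : σ →₀ ℕ) : ψ (monomial (q • u + c) 1) = ψ (monomial (q • v + c) 1) := by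
  have hmul (x : σ →₀ ℕ) :
      ψ (monomial (q • x + c) 1) = ψ (monomial x 1) ^ q * ψ (monomial c 1) := by
    rw [← map_pow, ← map_mul, monomial_pow, monomial_mul, one_pow, one_mul]
  rw [hmul, hmul, h]

end MonoidAlgebra

section RegularSequence

variable {R : Type*} [CommRing R] {g : ℕ} (f : Fin g → R)

theorem ofList_take_ofFn (k : ℕ) :
    Ideal.ofList ((List.ofFn f).take k) = Ideal.span (f '' {i | (i : ℕ) < k}) := by
  rw [Ideal.ofList]
  congr 1
  ext x
  simp only [Set.mem_ofPred_eq, List.mem_take_iff_getElem, List.length_ofFn, List.getElem_ofFn,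
    Set.mem_image, Fin.exists_iff, lt_min_iff]
  grind

theorem isRegular_ofFn_iff :
    RingTheory.Sequence.IsRegular R (List.ofFn f) ↔
      (∀ i x, f i * x ∈ Ideal.span (f '' Set.Iio i) → x ∈ Ideal.span (f '' Set.Iio i)) ∧
        Ideal.span (Set.range f) ≠ ⊤ := by
  have hlist : Ideal.ofList (List.ofFn f) = Ideal.span (Set.range f) := by
    rw [Ideal.ofList]
    congr 1
    ext x
    exact List.mem_ofFn
  rw [RingTheory.Sequence.isRegular_iff, RingTheory.Sequence.isWeaklyRegular_iff, smul_eq_mul,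
    Ideal.mul_top, hlist, ne_comm]
  refine and_congr_left fun _ => ?_
  simp only [isSMulRegular_quotient_iff_mem_of_smul_mem, smul_eq_mul, Ideal.mul_top,
    ofList_take_ofFn, List.getElem_ofFn, List.length_ofFn, Fin.forall_iff]
  exact Iff.rfl

end RegularSequence

section Arithmetic

theorem modEq_of_mul_modEq_mul_of_mul_gcd_eq {a e n x y : ℕ} (he : 0 < e) (hn : n * Nat.gcd e a = e)
    (h : x * a ≡ y * a [MOD e]) : x ≡ y [MOD n] := by
  have hquot : e / Nat.gcd e a = n :=
    Nat.div_eq_of_eq_mul_left (Nat.gcd_pos_of_pos_left a he) hn.symm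
  exact hquot ▸ h.cancel_right_div_gcd he

theorem gcd_range_succ_pos {a : ℕ → ℕ} (ha : 0 < a 0) (k : ℕ) :
    0 < (Finset.range (k + 1)).gcd a :=
  Nat.pos_of_dvd_of_pos (Finset.gcd_dvd (Finset.mem_range.2 k.succ_pos)) ha

theorem sum_univ_ite_lt {M : Type*} [AddCommMonoid M] {k N : ℕ} (hk : k ≤ N) (f : ℕ → M) :
    (∑ j : Fin N, if (j : ℕ) < k then f j else 0) = ∑ j ∈ Finset.range k, f j := by
  rw [Fin.sum_univ_eq_sum_range (fun j => if j < k then f j else 0), ← Finset.sum_filter]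
  congr 1
  ext j
  simp only [Finset.mem_filter, Finset.mem_range]
  omega

end Arithmetic

section PartialWeight

variable {g : ℕ} (a : ℕ → ℕ) (k : ℕ)

/-- The exponent of the image of `u ^ m` under the monomial map `φ_k` which sends `u_j` to `t ^ a_j`
for `j ≤ k` and fixes `u_j` for `j > k`: the first component is the exponent of `t`, the second one
the exponent of the fixed variables. -/
noncomputable def partialWeight : (Fin (g + 1) →₀ ℕ) →+ ℕ × (Fin (g + 1) →₀ ℕ) :=
  (Finsupp.weight fun j : Fin (g + 1) => if (j : ℕ) ≤ k then a j else 0).prod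
    (Finsupp.filterAddHom fun j => k < (j : ℕ))

variable {k} (m m' : Fin (g + 1) →₀ ℕ)

theorem partialWeight_fst :
    (partialWeight a k m).1 = ∑ j : Fin (g + 1), if (j : ℕ) ≤ k then m j * a j else 0 := by
  simp [partialWeight, Finsupp.weight_eq_sum]

variable {a m m'}

theorem partialWeight_eq_iff : partialWeight a k m = partialWeight a k m' ↔
    (partialWeight a k m).1 = (partialWeight a k m').1 ∧
      ∀ j : Fin (g + 1), k < j → m j = m' j := by
  rw [Prod.ext_iff, and_congr_right_iff]
  intro _
  change m.filter _ = m'.filter _ ↔ _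
  simp only [Finsupp.ext_iff, Finsupp.filter_apply]
  refine forall_congr' fun j => ?_
  split_ifs with hj <;> simp [hj]

theorem partialWeight_zero_injective (ha : 0 < a 0) :
    Function.Injective (partialWeight a 0 : (Fin (g + 1) →₀ ℕ) →+ _) := by
  intro m m' h
  obtain ⟨hfst, hsnd⟩ := partialWeight_eq_iff.1 h
  ext j
  cases j using Fin.cases with
  | zero => simpa [partialWeight_fst, Fin.sum_univ_succ, ha.ne'] using hfst
  | succ j => exact hsnd _ j.succ_pos

variable (a m) in
theorem partialWeight_succ_fst (i : Fin g) : (partialWeight a (i + 1) m).1 =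
    (partialWeight a i m).1 + m i.succ * a (i + 1) := by
  have hlast : m i.succ * a (i + 1) =
      ∑ j : Fin (g + 1), if j = i.succ then m j * a j else 0 := by simp
  rw [partialWeight_fst, partialWeight_fst, hlast, ← Finset.sum_add_distrib]
  refine Finset.sum_congr rfl fun j _ => ?_
  simp only [Fin.ext_iff, Fin.val_succ]
  grind

theorem partialWeight_eq_of_succ {i : Fin g}
    (h : partialWeight a (i + 1) m = partialWeight a (i + 1) m') (hi : m i.succ = m' i.succ) :
    partialWeight a i m = partialWeight a i m' := by
  obtain ⟨hfst, hsnd⟩ := partialWeight_eq_iff.1 h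
  rw [partialWeight_succ_fst, partialWeight_succ_fst, hi, Nat.add_right_cancel_iff] at hfst
  refine partialWeight_eq_iff.2 ⟨hfst, fun j hj => ?_⟩
  obtain rfl | hne := eq_or_ne j i.succ
  · exact hi
  · exact hsnd j (lt_of_le_of_ne hj fun hij => hne (Fin.ext hij.symm))

variable (a m) in
theorem gcd_dvd_partialWeight_fst :
    (Finset.range (k + 1)).gcd a ∣ (partialWeight a k m).1 := by
  rw [partialWeight_fst]
  refine Finset.dvd_sum fun j _ => ?_
  split_ifs with hj
  · exact (Finset.gcd_dvd (Finset.mem_range_succ_iff.2 hj)).mul_left _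
  · exact dvd_zero _

theorem modEq_of_partialWeight_succ_eq {d : ℕ} {i : Fin g} (ha : 0 < a 0)
    (hd : d * (Finset.range (i + 2)).gcd a = (Finset.range (i + 1)).gcd a)
    (h : partialWeight a (i + 1) m = partialWeight a (i + 1) m') :
    m i.succ ≡ m' i.succ [MOD d] := by
  set e := (Finset.range (i + 1)).gcd a
  have hgcd : (Finset.range (i + 2)).gcd a = Nat.gcd e (a (i + 1)) := by
    rw [Finset.range_add_one, Finset.gcd_insert, Nat.gcd_comm]
    rfl
  have hepos : 0 < e := gcd_range_succ_pos ha i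
  have hfst := (partialWeight_eq_iff.1 h).1
  rw [partialWeight_succ_fst, partialWeight_succ_fst] at hfst
  have hmod : m i.succ * a (i + 1) ≡ m' i.succ * a (i + 1) [MOD e] := by
    have hzero (m : Fin (g + 1) →₀ ℕ) : (partialWeight a i m).1 ≡ 0 [MOD e] :=
      Nat.modEq_zero_iff_dvd.2 (gcd_dvd_partialWeight_fst a m)
    exact ((hzero m).trans (hzero m').symm).add_left_cancel (congrArg (· % e) hfst)
  exact modEq_of_mul_modEq_mul_of_mul_gcd_eq hepos (hgcd ▸ hd) hmod

end PartialWeight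

section FreeSequence

variable {g : ℕ} {a n : ℕ → ℕ} {ℓ : ℕ → ℕ → ℕ}

variable (ℓ) in
/-- The exponent of the second monomial `u₀ ^ ℓ₀ ⋯ u_i ^ ℓ_i` of the binomial `f_{i+1}`; as `i` runs
through `Fin g`, the paper's index is `i + 1`. -/
noncomputable def relationExponent (i : Fin g) : Fin (g + 1) →₀ ℕ :=
  Finsupp.equivFunOnFinite.symm fun j => if (j : ℕ) < i + 1 then ℓ (i + 1) j else 0

theorem relationExponent_apply (i : Fin g) (j : Fin (g + 1)) :
    relationExponent ℓ i j = if (j : ℕ) < i + 1 then ℓ (i + 1) j else 0 :=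
  rfl

theorem relationExponent_apply_eq_zero {i : Fin g} {j : Fin (g + 1)} (hij : i < (j : ℕ)) :
    relationExponent ℓ i j = 0 :=
  if_neg (by omega)

theorem partialWeight_relationExponent {i : Fin g} {k : ℕ} (hik : i < k)
    (hrep : n (i + 1) * a (i + 1) = ∑ j ∈ Finset.range (i + 1), ℓ (i + 1) j * a j) :
    partialWeight a k (relationExponent ℓ i) =
      partialWeight a k (Finsupp.single i.succ (n (i + 1))) := by
  refine partialWeight_eq_iff.2 ⟨?_, fun j hj => ?_⟩
  · calc (partialWeight a k (relationExponent ℓ i)).1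
        = ∑ j : Fin (g + 1), if (j : ℕ) < i + 1 then ℓ (i + 1) j * a j else 0 := by
          rw [partialWeight_fst]
          refine Finset.sum_congr rfl fun j _ => ?_
          rw [relationExponent_apply]
          grind
      _ = n (i + 1) * a (i + 1) := by
          rw [sum_univ_ite_lt (by omega) fun j => ℓ (i + 1) j * a j, hrep]
      _ = (partialWeight a k (Finsupp.single i.succ (n (i + 1)))).1 := by
          rw [partialWeight_fst, Finset.sum_eq_single i.succ] <;> simp +contextual [hik]
  · have hne : j ≠ i.succ := by grind
    rw [relationExponent_apply_eq_zero (hik.trans hj), Finsupp.single_eq_of_ne hne]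

theorem partialWeight_relationExponent_ne {i : Fin g} {k : ℕ} (hki : k ≤ i)
    (hn : n (i + 1) ≠ 0) :
    partialWeight a k (relationExponent ℓ i) ≠
      partialWeight a k (Finsupp.single i.succ (n (i + 1))) := by
  intro h
  have hsucc := (partialWeight_eq_iff.1 h).2 i.succ (Nat.lt_succ_of_le hki)
  rw [relationExponent_apply_eq_zero (Nat.lt_succ_self i), Finsupp.single_eq_same] at hsucc
  exact hn hsucc.symm

variable (n ℓ) in
/-- The binomial `f_{i+1} = u_{i+1} ^ n_{i+1} - u₀ ^ ℓ₀ ⋯ u_i ^ ℓ_i`, written as a difference of two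
monomials. -/
noncomputable def relationBinomial (R : Type*) [CommRing R] (i : Fin g) :
    MvPolynomial (Fin (g + 1)) R :=
  monomial (Finsupp.single i.succ (n (i + 1))) 1 - monomial (relationExponent ℓ i) 1

theorem relationBinomial_eq_X_pow_sub_prod (R : Type*) [CommRing R] (i : Fin g) :
    relationBinomial n ℓ R i = X i.succ ^ n (i + 1) -
      ∏ j : Fin (g + 1), X j ^ (if (j : ℕ) < i + 1 then ℓ (i + 1) j else 0) := by
  rw [relationBinomial, X_pow_eq_monomial, monomial_eq (s := relationExponent ℓ i),
    Finsupp.prod_fintype _ _ fun _ => pow_zero _, C_1, one_mul]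
  rfl

variable (g a n ℓ) in
/-- The relations `n_i a_i = ∑_{j<i} ℓ_j^{(i)} a_j` for `1 ≤ i ≤ g` exhibit `a₀,…,a_g` as a free
sequence: `n_i` is the quotient of `e_{i-1} = gcd(a₀,…,a_{i-1})` by `e_i`. -/
structure IsFreeSequence : Prop where
  pos_zero : 0 < a 0
  mul_gcd : ∀ i < g, n (i + 1) * (Finset.range (i + 2)).gcd a = (Finset.range (i + 1)).gcd a
  mul_eq_sum : ∀ i < g, n (i + 1) * a (i + 1) = ∑ j ∈ Finset.range (i + 1), ℓ (i + 1) j * a j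

namespace IsFreeSequence

theorem ne_zero (h : IsFreeSequence g a n ℓ) (i : Fin g) : n (i + 1) ≠ 0 := by
  have hpos := gcd_range_succ_pos h.pos_zero i
  rw [← h.mul_gcd i i.isLt] at hpos
  exact (Nat.pos_of_mul_pos_right hpos).ne'

theorem map_monomial_eq {R S : Type*} [CommSemiring R] [CommSemiring S]
    (h : IsFreeSequence g a n ℓ) (ψ : MvPolynomial (Fin (g + 1)) R →+* S) {k : ℕ} (hk : k ≤ g)
    (hψ : ∀ i : Fin g, i < k → ψ (monomial (Finsupp.single i.succ (n (i + 1))) 1) =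
      ψ (monomial (relationExponent ℓ i) 1))
    {m m' : Fin (g + 1) →₀ ℕ} (hm : partialWeight a k m = partialWeight a k m') :
    ψ (monomial m 1) = ψ (monomial m' 1) := by
  induction k generalizing m m' with
  | zero => rw [partialWeight_zero_injective h.pos_zero hm]
  | succ k ih =>
    let i : Fin g := ⟨k, hk⟩
    wlog hle : m' i.succ ≤ m i.succ generalizing m m'
    · exact (this hm.symm (le_of_not_ge hle)).symm
    let u := Finsupp.single i.succ (n (i + 1))
    obtain ⟨q, hq⟩ : ∃ q, m i.succ = q * n (i + 1) + m' i.succ := by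
      have hmod := modEq_of_partialWeight_succ_eq h.pos_zero (h.mul_gcd i hk) hm
      obtain ⟨q, hq⟩ := (Nat.modEq_iff_dvd' hle).1 hmod.symm
      exact ⟨q, by rw [mul_comm, ← hq, Nat.sub_add_cancel hle]⟩
    obtain ⟨c, rfl⟩ : ∃ c, m = q • u + c := by
      refine exists_add_of_le ?_
      rw [Finsupp.smul_single, Finsupp.single_le_iff, hq]
      exact Nat.le_add_right _ _
    have hweight : partialWeight a k (q • relationExponent ℓ i + c) = partialWeight a k m' := by
      refine partialWeight_eq_of_succ (i := i) ?_ ?_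
      · rw [← hm, map_add, map_add, map_nsmul, map_nsmul,
          partialWeight_relationExponent (Nat.lt_succ_self k) (h.mul_eq_sum k hk)]
      · simpa [u, relationExponent_apply_eq_zero] using hq
    calc ψ (monomial (q • u + c) 1) = ψ (monomial (q • relationExponent ℓ i + c) 1) :=
          map_monomial_nsmul_add_congr ψ (hψ i (Nat.lt_succ_self k)) q c
      _ = ψ (monomial m' 1) := ih (by omega) (fun i hi => hψ i (by omega)) hweight

theorem ker_eq_span {R S ι : Type*} [CommRing R] [CommRing S] [Algebra R S]
    (h : IsFreeSequence g a n ℓ) {k : ℕ} (hk : k ≤ g) {φ : MvPolynomial (Fin (g + 1)) R →ₐ[R] S}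
    {b : ι → S} (hb : LinearIndependent R b) {w : (Fin (g + 1) →₀ ℕ) → ι}
    (hφ : ∀ m, φ (monomial m 1) = b (w m))
    (hw : ∀ m m', w m = w m' ↔ partialWeight a k m = partialWeight a k m') :
    RingHom.ker φ = Ideal.span (relationBinomial n ℓ R '' {i : Fin g | (i : ℕ) < k}) := by
  set J := Ideal.span (relationBinomial n ℓ R '' {i : Fin g | (i : ℕ) < k})
  refine le_antisymm ?_ (Ideal.span_le.2 ?_)
  · have hmk (i : Fin g) (hi : i < k) :
        Ideal.Quotient.mk J (monomial (Finsupp.single i.succ (n (i + 1))) 1) =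
          Ideal.Quotient.mk J (monomial (relationExponent ℓ i) 1) :=
      Ideal.Quotient.eq.2 (Ideal.subset_span (Set.mem_image_of_mem _ hi))
    have hker : LinearMap.ker φ.toLinearMap ≤
        LinearMap.ker (Ideal.Quotient.mkₐ R J).toLinearMap :=
      ker_le_ker_of_factorsThrough (basisMonomials (Fin (g + 1)) R).span_eq hb hφ
        fun m m' hm => h.map_monomial_eq _ hk hmk ((hw m m').1 hm)
    exact fun p hp => Ideal.Quotient.eq_zero_iff_mem.1 (hker hp)
  · rintro _ ⟨i, hi, rfl⟩
    rw [SetLike.mem_coe, RingHom.mem_ker, relationBinomial, map_sub, hφ, hφ, sub_eq_zero,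
      (hw _ _).2 (partialWeight_relationExponent hi (h.mul_eq_sum i i.isLt))]

theorem ker_aeval_X_pow (R : Type*) [CommRing R] (h : IsFreeSequence g a n ℓ) :
    RingHom.ker (aeval fun i : Fin (g + 1) => (Polynomial.X : Polynomial R) ^ a i) =
      Ideal.span (Set.range (relationBinomial (g := g) n ℓ R)) := by
  have himage : Set.range (relationBinomial (g := g) n ℓ R) =
      relationBinomial n ℓ R '' {i : Fin g | (i : ℕ) < g} := by simp
  rw [himage]
  refine h.ker_eq_span le_rfl (Polynomial.basisMonomials R).linearIndependent
    (w := fun m => (partialWeight a g m).1) (fun m => ?_) fun m m' => ?_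
  · have hle (j : Fin (g + 1)) : (j : ℕ) ≤ g := Nat.lt_succ_iff.1 j.isLt
    rw [aeval_monomial, map_one, one_mul, Finsupp.prod_fintype _ _ fun _ => pow_zero _]
    simp only [← pow_mul, Finset.prod_pow_eq_pow_sum, partialWeight_fst, hle, if_true,
      Polynomial.coe_basisMonomials, ← Polynomial.X_pow_eq_monomial, mul_comm]
  · rw [partialWeight_eq_iff, iff_self_and]
    exact fun _ j hj => absurd j.isLt (by omega)

theorem mem_span_of_mul_mem {R : Type*} [CommRing R] (h : IsFreeSequence g a n ℓ) {i : Fin g}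
    {p : MvPolynomial (Fin (g + 1)) R}
    (hp : relationBinomial n ℓ R i * p ∈ Ideal.span (relationBinomial n ℓ R '' Set.Iio i)) :
    p ∈ Ideal.span (relationBinomial n ℓ R '' Set.Iio i) := by
  let φ : MvPolynomial (Fin (g + 1)) R →ₐ[R] AddMonoidAlgebra R (ℕ × (Fin (g + 1) →₀ ℕ)) :=
    AddMonoidAlgebra.mapDomainAlgHom R R (partialWeight a i)
  have hφ (m) : φ (monomial m 1) = AddMonoidAlgebra.single (partialWeight a i m) 1 :=
    AddMonoidAlgebra.mapDomain_single
  have hker : RingHom.ker φ = Ideal.span (relationBinomial n ℓ R '' Set.Iio i) :=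
    h.ker_eq_span i.isLt.le (linearIndependent_single_one R _) hφ fun _ _ => Iff.rfl
  rw [← hker, RingHom.mem_ker] at hp ⊢
  rw [mul_comm, map_mul, relationBinomial, map_sub, hφ, hφ] at hp
  exact single_sub_single_mem_nonZeroDivisorsRight
    (partialWeight_relationExponent_ne le_rfl (h.ne_zero i)).symm _ hp

theorem isRegular_ofFn (R : Type*) [CommRing R] [Nontrivial R] (h : IsFreeSequence g a n ℓ) :
    RingTheory.Sequence.IsRegular (MvPolynomial (Fin (g + 1)) R)
      (List.ofFn (relationBinomial (g := g) n ℓ R)) := by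
  refine (isRegular_ofFn_iff _).2 ⟨fun i p => h.mem_span_of_mul_mem, ?_⟩
  rw [← h.ker_aeval_X_pow R]
  exact RingHom.ker_ne_top _

end IsFreeSequence

end FreeSequence

theorem stmt4_general {R : Type*} [CommRing R] [Nontrivial R] {g : ℕ} {a : ℕ → ℕ} (ha : 0 < a 0)
    {e : ℕ → ℕ} (he : ∀ i, e i = (Finset.range (i + 1)).gcd a)
    {n : ℕ → ℕ} (hn : ∀ i, 1 ≤ i → i ≤ g → n i * e i = e (i - 1))
    {ℓ : ℕ → ℕ → ℕ}
    (hrep : ∀ i, 1 ≤ i → i ≤ g → n i * a i = ∑ j ∈ Finset.range i, ℓ i j * a j)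
    {f : Fin g → MvPolynomial (Fin (g + 1)) R}
    (hf : ∀ i : Fin g, f i = X i.succ ^ n ((i : ℕ) + 1) -
      ∏ j : Fin (g + 1), X j ^ (if (j : ℕ) < (i : ℕ) + 1 then ℓ ((i : ℕ) + 1) (j : ℕ) else 0)) :
    RingHom.ker (aeval fun i : Fin (g + 1) => (Polynomial.X : Polynomial R) ^ a i) =
        Ideal.span (Set.range f) ∧
      RingTheory.Sequence.IsRegular (MvPolynomial (Fin (g + 1)) R) (List.ofFn f) := by
  obtain rfl : f = relationBinomial n ℓ R :=
    funext fun i => by rw [hf, relationBinomial_eq_X_pow_sub_prod]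
  have hfree : IsFreeSequence g a n ℓ :=
    { pos_zero := ha
      mul_gcd := fun i hi => by simpa only [he, Nat.add_sub_cancel] using hn (i + 1) i.succ_pos hi
      mul_eq_sum := fun i hi => hrep (i + 1) i.succ_pos hi }
  exact ⟨hfree.ker_aeval_X_pow R, hfree.isRegular_ofFn R⟩

/-- For a free numerical semigroup `Γ = ⟨a₀,…,a_g⟩` with standard representations
`n_i a_i = ∑_{j<i} ℓ_j^{(i)} a_j` (`ℓ_j^{(i)} < n_j` for `j ≥ 1`), the binomials
`f_i = u_i^{n_i} − ∏_{j<i} u_j^{ℓ_j^{(i)}}` generate the kernel of the map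
`u_i ↦ t^{a_i}` and form a regular sequence. -/
theorem stmt4 (g : ℕ) (a : ℕ → ℕ) (hpos : ∀ i, i ≤ g → 0 < a i)
    (e : ℕ → ℕ) (he : ∀ i, e i = (Finset.range (i + 1)).gcd a)
    (hgcd : e g = 1)
    (n : ℕ → ℕ) (hn : ∀ i, 1 ≤ i → i ≤ g → n i * e i = e (i - 1))
    (ℓ : ℕ → ℕ → ℕ)
    (hrep : ∀ i, 1 ≤ i → i ≤ g →
      n i * a i = ∑ j ∈ Finset.range i, ℓ i j * a j)
    (hℓ : ∀ i j, 1 ≤ j → j < i → i ≤ g → ℓ i j < n j)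
    (f : Fin g → MvPolynomial (Fin (g + 1)) ℂ)
    (hf : ∀ i : Fin g,
      f i = X i.succ ^ n ((i : ℕ) + 1) -
        ∏ j : Fin (g + 1),
          X j ^ (if (j : ℕ) < (i : ℕ) + 1 then ℓ ((i : ℕ) + 1) (j : ℕ) else 0)) :
    RingHom.ker (MvPolynomial.aeval
        (fun i : Fin (g + 1) => (Polynomial.X : Polynomial ℂ) ^ a i) :
        MvPolynomial (Fin (g + 1)) ℂ →ₐ[ℂ] Polynomial ℂ).toRingHom
      = Ideal.span (Set.range f) ∧
    RingTheory.Sequence.IsRegular (MvPolynomial (Fin (g + 1)) ℂ) (List.ofFn f) :=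
  stmt4_general (hpos 0 g.zero_le) he hn hrep hf
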